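/- arXiv:2007.10864 — 4 statements merged into one kernel-verified Lean document; each statement's English description precedes it below -/
import Mathlib

section
/- Let (X,d,μ) be a space of homogeneous type and let p(·) be an exponent function with p(·) ∈ LH and p₊ < ∞. If w is a weight for which there exists a constant C such that ‖t·χ_{{x∈X : Mf(x) > t}}·w‖_{p(·)} ≤ C‖f·w‖_{p(·)} for all measurable functions f and all t > 0, then w ∈ A_{p(·)}. -/
open MeasureTheory ENNReal NNReal Filter

namespace SHT

variable {X : Type*} [MeasurableSpace X]

/-- The quasi-metric ball `B(x,r) = {y | d x y < r}`. -/
def ball (d : X → X → ℝ) (x : X) (r : ℝ) : Set X := {y | d x y < r}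

/-- `(X, d, μ)` is a space of homogeneous type with quasi-metric constant `A₀`
and doubling constant `Cμ`. -/
structure IsSHT (d : X → X → ℝ) (μ : Measure X) (A₀ Cμ : ℝ) : Prop where
  d_nonneg : ∀ x y, 0 ≤ d x y
  d_eq_zero_iff : ∀ x y, d x y = 0 ↔ x = y
  d_symm : ∀ x y, d x y = d y x
  one_le_A₀ : 1 ≤ A₀
  d_triangle : ∀ x y z, d x y ≤ A₀ * (d x z + d z y)
  one_le_Cμ : 1 ≤ Cμ
  measurableSet_ball : ∀ x r, MeasurableSet (ball d x r)
  ball_pos : ∀ x r, 0 < r → 0 < μ (ball d x r)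
  ball_ne_top : ∀ x r, 0 < r → μ (ball d x r) ≠ ⊤
  doubling : ∀ x r, 0 < r → μ (ball d x (2 * r)) ≤ ENNReal.ofReal Cμ * μ (ball d x r)

/-- The modular `ρ_{p(·)}(f) = ∫_{X ∖ X_∞} f(x)^{p(x)} dμ + ‖f‖_{L^∞(X_∞)}`
for an (extended-real valued) exponent `p` and a nonnegative function `f`. -/
noncomputable def modular (μ : Measure X) (p : X → ℝ≥0∞) (f : X → ℝ≥0∞) : ℝ≥0∞ :=
  (∫⁻ x in {x | p x ≠ ⊤}, f x ^ (p x).toReal ∂μ) + essSup f (μ.restrict {x | p x = ⊤})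

/-- The Luxemburg norm `‖f‖_{p(·)} = inf {λ > 0 | ρ_{p(·)}(f/λ) ≤ 1}`. -/
noncomputable def luxNorm (μ : Measure X) (p : X → ℝ≥0∞) (f : X → ℝ≥0∞) : ℝ≥0∞ :=
  sInf {lam : ℝ≥0∞ | 0 < lam ∧ modular μ p (fun x => f x / lam) ≤ 1}

/-- The pointwise conjugate exponent `p'(x) = p(x)/(p(x)-1)`, with the conventions
`p'(x) = ∞` if `p(x) = 1` and `p'(x) = 1` if `p(x) = ∞`. -/
noncomputable def conjExp (p : X → ℝ≥0∞) : X → ℝ≥0∞ := fun x =>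
  if p x = ⊤ then 1 else p x / (p x - 1)

/-- A real-valued exponent function viewed as an extended-real valued one. -/
noncomputable def ofRealExp (p : X → ℝ) : X → ℝ≥0∞ := fun x => ENNReal.ofReal (p x)

/-- Local log-Hölder continuity of an exponent function. -/
def LH0 (d : X → X → ℝ) (p : X → ℝ) : Prop :=
  ∃ C₀ : ℝ, 0 < C₀ ∧ ∀ x y, 0 < d x y → d x y < 1 / 2 →
    |p x - p y| ≤ C₀ / (-Real.log (d x y))

/-- Log-Hölder continuity at infinity, with respect to the base point `x₀`
and with limit value `pinf`. -/
def LHinf (d : X → X → ℝ) (x₀ : X) (p : X → ℝ) (pinf : ℝ) : Prop :=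
  ∃ Cinf : ℝ, 0 < Cinf ∧ ∀ x, |p x - pinf| ≤ Cinf / Real.log (Real.exp 1 + d x x₀)

/-- Global log-Hölder continuity. -/
def LH (d : X → X → ℝ) (x₀ : X) (p : X → ℝ) : Prop :=
  LH0 d p ∧ ∃ pinf : ℝ, LHinf d x₀ p pinf

/-- `w` is a weight: measurable, positive and finite a.e., and locally integrable. -/
def IsWeight (d : X → X → ℝ) (μ : Measure X) (w : X → ℝ≥0∞) : Prop :=
  Measurable w ∧ (∀ᵐ x ∂μ, 0 < w x ∧ w x < ⊤) ∧
    ∀ (x : X) (r : ℝ), 0 < r → (∫⁻ y in ball d x r, w y ∂μ) ≠ ⊤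

/-- The variable Muckenhoupt condition `w ∈ A_{p(·)}`:
`‖w χ_B‖_{p(·)} ‖w⁻¹ χ_B‖_{p'(·)} ≤ K μ(B)` for all quasi-metric balls `B`. -/
def Apvar (d : X → X → ℝ) (μ : Measure X) (p : X → ℝ≥0∞) (w : X → ℝ≥0∞) : Prop :=
  ∃ K : ℝ≥0, ∀ (x : X) (r : ℝ), 0 < r →
    luxNorm μ p ((ball d x r).indicator w) *
      luxNorm μ (conjExp p) ((ball d x r).indicator fun y => (w y)⁻¹) ≤ K * μ (ball d x r)

/-- The uncentered Hardy–Littlewood maximal operator over quasi-metric balls. -/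
noncomputable def maximal (d : X → X → ℝ) (μ : Measure X) (f : X → ℝ≥0∞) (x : X) : ℝ≥0∞ :=
  ⨆ (z : X) (r : ℝ) (_ : 0 < r ∧ x ∈ ball d z r),
    (μ (ball d z r))⁻¹ * ∫⁻ y in ball d z r, f y ∂μ

/-- `f ∈ L^{p(·)}`: the modular of `f/λ` is finite for some `λ > 0`. -/
def MemLpvar (μ : Measure X) (p : X → ℝ≥0∞) (f : X → ℝ≥0∞) : Prop :=
  ∃ lam : ℝ≥0∞, 0 < lam ∧ modular μ p (fun x => f x / lam) < ⊤


theorem modular_ofRealExp (μ : Measure X) (p : X → ℝ) (hp : ∀ x, 1 ≤ p x) (f : X → ℝ≥0∞) :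
    modular μ (ofRealExp p) f = ∫⁻ x, f x ^ (p x) ∂μ := by
  have h0 : ∀ x, (ENNReal.ofReal (p x)).toReal = p x := fun x =>
    ENNReal.toReal_ofReal (by linarith [hp x])
  simp [modular, ofRealExp, h0]

theorem modular_mono (μ : Measure X) (p : X → ℝ) (hp : ∀ x, 1 ≤ p x) {f g : X → ℝ≥0∞}
    (h : ∀ x, f x ≤ g x) : modular μ (ofRealExp p) f ≤ modular μ (ofRealExp p) g := by
  rw [modular_ofRealExp μ p hp, modular_ofRealExp μ p hp]
  refine lintegral_mono fun x => ?_
  exact ENNReal.rpow_le_rpow (h x) (by linarith [hp x])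

theorem luxNorm_mono (μ : Measure X) (p : X → ℝ) (hp : ∀ x, 1 ≤ p x) {f g : X → ℝ≥0∞}
    (h : ∀ x, f x ≤ g x) : luxNorm μ (ofRealExp p) f ≤ luxNorm μ (ofRealExp p) g := by
  refine sInf_le_sInf ?_
  rintro l ⟨hl, hm⟩
  exact ⟨hl, (modular_mono μ p hp fun x => ENNReal.div_le_div_right (h x) l).trans hm⟩

theorem luxNorm_const_mul (μ : Measure X) (p : X → ℝ≥0∞) (f : X → ℝ≥0∞) (t : ℝ≥0∞)
    (ht : t ≠ 0) (ht' : t ≠ ⊤) : t * luxNorm μ p f ≤ luxNorm μ p (fun x => t * f x) := by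
  refine le_sInf ?_
  rintro l ⟨hl, hm⟩
  have key : luxNorm μ p f ≤ l / t := by
    refine sInf_le ⟨ENNReal.div_pos hl.ne' ht', ?_⟩
    convert hm using 3 with x
    rw [div_eq_mul_inv, ENNReal.inv_div (Or.inl ht') (Or.inl ht), div_eq_mul_inv, div_eq_mul_inv]
    ring
  calc t * luxNorm μ p f ≤ t * (l / t) := by gcongr
    _ = l := ENNReal.mul_div_cancel ht ht'

theorem luxNorm_le_max (μ : Measure X) (p : X → ℝ) (hp : ∀ x, 1 ≤ p x) (h : X → ℝ≥0∞) :
    luxNorm μ (ofRealExp p) h ≤ max 1 (∫⁻ x, h x ^ (p x) ∂μ) := by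
  set I := ∫⁻ x, h x ^ (p x) ∂μ with hI
  by_cases hT : I = ⊤
  · simp [hT]
  have h1 : (1 : ℝ≥0∞) ≤ max 1 I := le_max_left _ _
  have h0 : max 1 I ≠ 0 := (lt_of_lt_of_le one_pos h1).ne'
  have ht : max 1 I ≠ ⊤ := by simp [hT]
  refine sInf_le ⟨lt_of_lt_of_le one_pos h1, ?_⟩
  rw [modular_ofRealExp μ p hp]
  calc ∫⁻ x, (h x / max 1 I) ^ (p x) ∂μ ≤ ∫⁻ x, h x ^ (p x) * (max 1 I)⁻¹ ∂μ := by
        refine lintegral_mono fun x => ?_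
        have hx := hp x
        rw [ENNReal.div_rpow_of_nonneg _ _ (by linarith), div_eq_mul_inv]
        gcongr
        calc max 1 I = (max 1 I) ^ (1 : ℝ) := (ENNReal.rpow_one _).symm
          _ ≤ _ := ENNReal.rpow_le_rpow_of_exponent_le h1 hx
    _ = I * (max 1 I)⁻¹ := lintegral_mul_const' _ _ (ENNReal.inv_ne_top.2 h0)
    _ ≤ max 1 I * (max 1 I)⁻¹ := by gcongr; exact le_max_right _ _
    _ = 1 := ENNReal.mul_inv_cancel h0 ht

theorem conjExp_eq_top (p : X → ℝ) (hp : ∀ x, 1 ≤ p x) (x : X) :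
    conjExp (ofRealExp p) x = ⊤ ↔ p x = 1 := by
  have : (1 : ℝ≥0∞) = ENNReal.ofReal 1 := by simp
  simp only [conjExp, ofRealExp, ENNReal.ofReal_ne_top, if_false, ENNReal.div_eq_top]
  rw [this, ← ENNReal.ofReal_sub _ zero_le_one]
  simp only [ENNReal.ofReal_eq_zero, ENNReal.ofReal_ne_top, false_and, or_false]
  have := hp x
  constructor
  · rintro ⟨_, h⟩; linarith
  · intro h; constructor <;> simp [h]

theorem conjExp_toReal (p : X → ℝ) (hp : ∀ x, 1 ≤ p x) (x : X) :
    (conjExp (ofRealExp p) x).toReal = p x / (p x - 1) := by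
  have : (1 : ℝ≥0∞) = ENNReal.ofReal 1 := by simp
  simp only [conjExp, ofRealExp, ENNReal.ofReal_ne_top, if_false]
  have hx := hp x
  rw [this, ← ENNReal.ofReal_sub _ zero_le_one, ENNReal.toReal_div,
    ENNReal.toReal_ofReal (by linarith), ENNReal.toReal_ofReal (by linarith)]

theorem dual_modular (μ : Measure X) (p : X → ℝ) (hpm : Measurable p) (hp : ∀ x, 1 ≤ p x)
    (v : X → ℝ≥0∞) (hv : Measurable v) (hvt : ∀ᵐ x ∂μ, v x < ⊤) (B : Set X)
    (hB : MeasurableSet B) (hμB : μ B ≠ ⊤) (hv0 : ∀ x, x ∉ B → v x = 0)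
    (H : ∀ h : X → ℝ≥0∞, Measurable h → ∫⁻ x, h x * v x ∂μ ≤ luxNorm μ (ofRealExp p) h) :
    modular μ (conjExp (ofRealExp p)) (fun x => v x / 2) ≤ 1 := by
  have hm1 : MeasurableSet {x | p x = 1} := hpm (measurableSet_singleton 1)
  -- the part where p = 1
  have h1 : ∀ᵐ x ∂μ, p x = 1 → v x ≤ 1 := by
    set E := {x | p x = 1} ∩ {x | 1 < v x} with hE
    have hEm : MeasurableSet E := hm1.inter (measurableSet_lt measurable_const hv)
    have hEB : E ⊆ B := by
      intro x hx
      by_contra hxB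
      have := hx.2
      simp [hv0 x hxB] at this
    have hEt : μ E ≠ ⊤ := ne_top_of_le_ne_top hμB (measure_mono hEB)
    have hE0 : μ E = 0 := by
      by_contra hne
      have hle : luxNorm μ (ofRealExp p) (E.indicator 1) ≤ μ E := by
        refine sInf_le ⟨pos_iff_ne_zero.2 hne, ?_⟩
        rw [modular_ofRealExp μ p hp]
        calc ∫⁻ x, (E.indicator 1 x / μ E) ^ (p x) ∂μ
            = ∫⁻ x, E.indicator (fun _ => (μ E)⁻¹) x ∂μ := by
              refine lintegral_congr fun x => ?_
              by_cases hx : x ∈ E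
              · have : p x = 1 := hx.1
                simp [hx, this]
              · have := hp x
                simp [hx, show 0 < p x by linarith]
          _ = 1 := by
              rw [lintegral_indicator hEm, setLIntegral_const, ENNReal.inv_mul_cancel hne hEt]
          _ ≤ 1 := le_rfl
      have h2 := (H (E.indicator 1) (measurable_one.indicator hEm)).trans hle
      have h3 : ∫⁻ x, E.indicator 1 x * v x ∂μ = ∫⁻ x in E, v x ∂μ := by
        rw [← lintegral_indicator hEm]
        refine lintegral_congr fun x => ?_
        by_cases hx : x ∈ E <;> simp [hx]
      rw [h3] at h2
      have h4 : ∫⁻ x in E, 1 ∂μ < ∫⁻ x in E, v x ∂μ := by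
        refine setLIntegral_strict_mono hEm hne hv ?_ ?_
        · simpa using hEt
        · exact Eventually.of_forall fun x hx => hx.2
      rw [setLIntegral_one] at h4
      exact absurd h4 (not_lt.2 h2)
    rw [ae_iff]
    convert hE0 using 2
    ext x; simp [hE]
  set q : X → ℝ := fun x => p x / (p x - 1) with hq
  have hqm : Measurable q := hpm.div (hpm.sub_const 1)
  set u : X → ℝ≥0∞ := fun x => v x / 2 with hu
  have hum : Measurable u := hv.div_const 2
  have hvu : ∀ x, v x = 2 * u x := fun x => by
    simp only [hu]; rw [ENNReal.mul_div_cancel] <;> simp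
  have huqm : Measurable fun x => u x ^ q x := hum.pow hqm
  have hbound : ∀ n : ℕ, ∫⁻ x in {x | p x ≠ 1} ∩ (B ∩ {x | u x ^ q x ≤ n}), u x ^ q x ∂μ ≤ 2⁻¹ := by
    intro n
    set F := {x | p x ≠ 1} ∩ (B ∩ {x | u x ^ q x ≤ n}) with hF
    have hFm : MeasurableSet F :=
      hm1.compl.inter (hB.inter (measurableSet_le huqm measurable_const))
    set J := ∫⁻ x in F, u x ^ q x ∂μ with hJ
    have hJt : J ≠ ⊤ := by
      have : J ≤ ∫⁻ x in F, (n : ℝ≥0∞) ∂μ := setLIntegral_mono measurable_const fun x hx => hx.2.2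
      rw [setLIntegral_const] at this
      refine ne_top_of_le_ne_top (ENNReal.mul_ne_top (by simp) ?_) this
      exact ne_top_of_le_ne_top hμB (measure_mono fun x hx => hx.2.1)
    have h2 := (H (F.indicator fun x => u x ^ (q x - 1))
      ((hum.pow (hqm.sub_const 1)).indicator hFm)).trans (luxNorm_le_max μ p hp _)
    have hgt : ∀ x ∈ F, 1 < p x := fun x hx => lt_of_le_of_ne (hp x) (Ne.symm hx.1)
    have e1 : ∫⁻ x, (F.indicator fun x => u x ^ (q x - 1)) x * v x ∂μ = 2 * J := by
      rw [hJ, ← lintegral_const_mul _ huqm, ← lintegral_indicator hFm]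
      refine lintegral_congr fun x => ?_
      by_cases hx : x ∈ F
      · have h1p := hgt x hx
        have hq1 : 0 < q x - 1 := by
          have : q x - 1 = 1 / (p x - 1) := by
            simp only [hq]; field_simp [show p x - 1 ≠ 0 by linarith]; ring
          rw [this]; exact div_pos one_pos (by linarith)
        simp only [Set.indicator_of_mem hx]
        rw [hvu x, mul_left_comm]
        congr 1
        conv_lhs => rw [← ENNReal.rpow_one (u x), ← ENNReal.rpow_mul, one_mul]
        rw [← ENNReal.rpow_add_of_nonneg _ _ hq1.le zero_le_one]
        congr 1; ring
      · simp [hx]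
    have e2 : ∫⁻ x, (F.indicator fun x => u x ^ (q x - 1)) x ^ (p x) ∂μ = J := by
      rw [hJ, ← lintegral_indicator hFm]
      refine lintegral_congr fun x => ?_
      by_cases hx : x ∈ F
      · have h1p := hgt x hx
        simp only [Set.indicator_of_mem hx]
        rw [← ENNReal.rpow_mul]
        congr 1
        simp only [hq]; field_simp [show p x - 1 ≠ 0 by linarith]; ring
      · have := hp x
        simp [hx, show 0 < p x by linarith]
    rw [e1, e2] at h2
    lift J to ℝ≥0 using hJt with j
    have h3 : 2 * j ≤ max 1 j := by exact_mod_cast h2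
    have h4 : j ≤ 2⁻¹ := by
      have h5 : 2 * (j : ℝ) ≤ max 1 (j : ℝ) := by exact_mod_cast h3
      have h6 : (0 : ℝ) ≤ j := j.2
      have : (j : ℝ) ≤ 2⁻¹ := by
        rcases le_total (1 : ℝ) j with h | h
        · rw [max_eq_right h] at h5; linarith
        · rw [max_eq_left h] at h5; linarith
      exact_mod_cast this
    have := ENNReal.coe_le_coe.2 h4
    simpa using this
  have hint : ∫⁻ x in {x | p x ≠ 1}, u x ^ q x ∂μ ≤ 2⁻¹ := by
    set F : ℕ → Set X := fun n => {x | p x ≠ 1} ∩ (B ∩ {x | u x ^ q x ≤ n}) with hF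
    have hFm : ∀ n, MeasurableSet (F n) := fun n =>
      hm1.compl.inter (hB.inter (measurableSet_le huqm measurable_const))
    have hmono : Monotone F := by
      intro m n hmn x hx
      refine ⟨hx.1, hx.2.1, le_trans (show u x ^ q x ≤ m from hx.2.2) ?_⟩
      exact_mod_cast hmn
    calc ∫⁻ x in {x | p x ≠ 1}, u x ^ q x ∂μ
        = ∫⁻ x, {x | p x ≠ 1}.indicator (fun x => u x ^ q x) x ∂μ :=
          (lintegral_indicator hm1.compl _).symm
      _ ≤ ∫⁻ x, ⨆ n, (F n).indicator (fun x => u x ^ q x) x ∂μ := by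
          refine lintegral_mono_ae ?_
          filter_upwards [hvt] with x hx
          by_cases hx1 : p x = 1
          · simp [hx1]
          have h1p : 1 < p x := lt_of_le_of_ne (hp x) (Ne.symm hx1)
          have hq0 : 0 < q x := div_pos (by linarith) (by linarith)
          rw [Set.indicator_of_mem (show x ∈ {x | p x ≠ 1} from hx1)]
          by_cases hxB : x ∈ B
          · have hut : u x ^ q x ≠ ⊤ :=
              ENNReal.rpow_ne_top_of_nonneg hq0.le (ENNReal.div_ne_top hx.ne (by simp))
            obtain ⟨n, hn⟩ := ENNReal.exists_nat_gt hut
            refine le_iSup_of_le n ?_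
            rw [Set.indicator_of_mem (show x ∈ F n from ⟨hx1, hxB, hn.le⟩)]
          · have : u x = 0 := by simp [hu, hv0 x hxB]
            simp [this, hq0]
      _ = ⨆ n, ∫⁻ x, (F n).indicator (fun x => u x ^ q x) x ∂μ := by
          refine lintegral_iSup (fun n => huqm.indicator (hFm n)) ?_
          intro m n hmn x
          exact Set.indicator_le_indicator_of_subset (hmono hmn) (fun _ => zero_le) x
      _ ≤ 2⁻¹ := by
          refine iSup_le fun n => ?_
          rw [lintegral_indicator (hFm n)]
          exact hbound n
  have hs1 : {x | conjExp (ofRealExp p) x ≠ ⊤} = {x | p x ≠ 1} := by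
    ext x; simp only [Set.mem_ofPred_eq, ne_eq, conjExp_eq_top p hp]
  have hs2 : {x | conjExp (ofRealExp p) x = ⊤} = {x | p x = 1} := by
    ext x; simp only [Set.mem_ofPred_eq, conjExp_eq_top p hp]
  unfold modular
  rw [hs1, hs2]
  simp only [conjExp_toReal p hp]
  have hes : essSup (fun x => v x / 2) (μ.restrict {x | p x = 1}) ≤ 2⁻¹ := by
    refine essSup_le_of_ae_le _ ?_
    rw [EventuallyLE, ae_restrict_iff' hm1]
    filter_upwards [h1] with x hx hx1
    rw [div_eq_mul_inv]
    calc v x * 2⁻¹ ≤ 1 * 2⁻¹ := by gcongr; exact hx hx1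
      _ = 2⁻¹ := one_mul _
  calc _ ≤ (2⁻¹ : ℝ≥0∞) + 2⁻¹ := add_le_add hint hes
    _ = 1 := ENNReal.inv_two_add_inv_two

theorem Apvar_of_weak_type
    {X : Type*} [MeasurableSpace X] (d : X → X → ℝ) (μ : Measure X) (A₀ Cμ : ℝ)
    (hX : IsSHT d μ A₀ Cμ) (x₀ : X)
    (p : X → ℝ) (hpmeas : Measurable p) (hp1 : ∀ x, 1 ≤ p x)
    (hLH : LH d x₀ p)
    (w : X → ℝ≥0∞) (hw : IsWeight d μ w)
    (C : ℝ≥0) (hC : 0 < C)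
    (hweak : ∀ f : X → ℝ≥0∞, Measurable f → ∀ t : ℝ≥0, 0 < t →
      luxNorm μ (ofRealExp p)
          ({x | (t : ℝ≥0∞) < maximal d μ f x}.indicator fun x => (t : ℝ≥0∞) * w x) ≤
        C * luxNorm μ (ofRealExp p) (fun x => f x * w x)) :
    Apvar d μ (ofRealExp p) w := by
  obtain ⟨hwm, hwpos, -⟩ := hw
  refine ⟨2 * C, fun z r hr => ?_⟩
  set B := ball d z r with hBdef
  have hBm : MeasurableSet B := hX.measurableSet_ball z r
  have hB0 : μ B ≠ 0 := (hX.ball_pos z r hr).ne'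
  have hBt : μ B ≠ ⊤ := hX.ball_ne_top z r hr
  have hCne : (C : ℝ≥0∞) ≠ 0 := by simpa using hC.ne'
  set N := luxNorm μ (ofRealExp p) (B.indicator w) with hN
  by_cases hN0 : N = 0
  · simp [hN0]
  have hwi : Measurable fun x => (w x)⁻¹ := hwm.inv
  have avg : ∀ h : X → ℝ≥0∞, Measurable h →
      ((μ B)⁻¹ * ∫⁻ y in B, h y * (w y)⁻¹ ∂μ) * N ≤ C * luxNorm μ (ofRealExp p) h := by
    intro h hh
    refine ENNReal.mul_le_of_forall_lt fun t ht b hb => ?_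
    by_cases ht0 : t = 0
    · simp [ht0]
    have htt : t ≠ ⊤ := ht.ne_top
    refine (mul_le_mul_right hb.le t).trans ?_
    lift t to ℝ≥0 using htt
    have htp : 0 < t := pos_iff_ne_zero.2 (by simpa using ht0)
    calc (t : ℝ≥0∞) * N ≤ luxNorm μ (ofRealExp p) (fun x => t * B.indicator w x) :=
          luxNorm_const_mul μ _ _ _ ht0 (by simp)
      _ ≤ luxNorm μ (ofRealExp p)
          ({x | (t : ℝ≥0∞) < maximal d μ (fun y => h y * (w y)⁻¹) x}.indicator
            fun x => (t : ℝ≥0∞) * w x) := by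
          refine luxNorm_mono μ p hp1 fun x => ?_
          by_cases hx : x ∈ B
          · have : x ∈ {x | (t : ℝ≥0∞) < maximal d μ (fun y => h y * (w y)⁻¹) x} := by
              refine lt_of_lt_of_le ht ?_
              exact le_iSup_of_le z (le_iSup_of_le r (le_iSup_of_le ⟨hr, hx⟩ le_rfl))
            rw [Set.indicator_of_mem hx, Set.indicator_of_mem this]
          · simp [hx]
      _ ≤ C * luxNorm μ (ofRealExp p) (fun x => h x * (w x)⁻¹ * w x) :=
          hweak _ (hh.mul hwi) t htp
      _ ≤ C * luxNorm μ (ofRealExp p) h := by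
          gcongr
          refine luxNorm_mono μ p hp1 fun x => ?_
          rw [mul_assoc]
          exact mul_le_of_le_one_right zero_le (ENNReal.inv_mul_le_one _)
  have hNt : N ≠ ⊤ := by
    intro hNT
    have h1 := avg (B.indicator 1) (measurable_one.indicator hBm)
    have h2 : luxNorm μ (ofRealExp p) (B.indicator 1) ≤ max 1 (μ B) := by
      refine (luxNorm_le_max μ p hp1 _).trans (le_of_eq ?_)
      congr 1
      rw [← lintegral_indicator_one hBm]
      refine lintegral_congr fun x => ?_
      have := hp1 x
      by_cases hx : x ∈ B <;> simp [hx, show 0 < p x by linarith]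
    have h3 : ∫⁻ y in B, B.indicator 1 y * (w y)⁻¹ ∂μ ≠ 0 := by
      have e : ∫⁻ y in B, B.indicator 1 y * (w y)⁻¹ ∂μ = ∫⁻ y in B, (w y)⁻¹ ∂μ :=
        setLIntegral_congr_fun hBm fun x hx => by simp [hx]
      rw [e]
      intro h0
      rw [lintegral_eq_zero_iff hwi] at h0
      have h4 : ∀ᵐ x ∂(μ.restrict B), False := by
        filter_upwards [h0, ae_restrict_of_ae hwpos] with x hx hx'
        simp at hx
        exact hx'.2.ne hx
      rw [eventually_false_iff_eq_bot, ae_eq_bot, Measure.restrict_eq_zero] at h4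
      exact hB0 h4
    rw [hNT, ENNReal.mul_top (mul_ne_zero (ENNReal.inv_ne_zero.2 hBt) h3)] at h1
    have h5 : (C : ℝ≥0∞) * luxNorm μ (ofRealExp p) (B.indicator 1) ≠ ⊤ :=
      ENNReal.mul_ne_top (by simp) (ne_top_of_le_ne_top (by simp [hBt]) h2)
    exact h5 (top_le_iff.1 h1)
  set A : ℝ≥0∞ := C * μ B / N with hA
  have hA0 : A ≠ 0 := (ENNReal.div_pos (mul_ne_zero hCne hB0) hNt).ne'
  have hAt : A ≠ ⊤ := ENNReal.div_ne_top (ENNReal.mul_ne_top (by simp) hBt) hN0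
  have hfin := dual_modular μ p hpmeas hp1 (fun x => B.indicator (fun y => (w y)⁻¹) x / A)
    ((hwi.indicator hBm).div_const A)
    (by
      filter_upwards [hwpos] with x hx
      refine ENNReal.div_lt_top ?_ hA0
      by_cases hxB : x ∈ B
      · simp [hxB, hx.1.ne']
      · simp [hxB]) B hBm hBt (fun x hx => by simp [hx])
    (by
      intro h hh
      have e : ∫⁻ x, h x * (B.indicator (fun y => (w y)⁻¹) x / A) ∂μ
          = (∫⁻ y in B, h y * (w y)⁻¹ ∂μ) * A⁻¹ := by
        rw [← lintegral_mul_const' _ _ (ENNReal.inv_ne_top.2 hA0), ← lintegral_indicator hBm]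
        refine lintegral_congr fun x => ?_
        by_cases hx : x ∈ B
        · simp [hx, div_eq_mul_inv, mul_assoc]
        · simp [hx]
      rw [e, ← div_eq_mul_inv]
      refine ENNReal.div_le_of_le_mul ?_
      have h1 := avg h hh
      set I := ∫⁻ y in B, h y * (w y)⁻¹ ∂μ
      calc I = ((μ B)⁻¹ * I * N) * (μ B / N) := by
            have a1 := ENNReal.mul_inv_cancel hB0 hBt
            have a2 := ENNReal.mul_inv_cancel hN0 hNt
            calc I = I * (μ B * (μ B)⁻¹) * (N * N⁻¹) := by rw [a1, a2]; simp
              _ = _ := by rw [div_eq_mul_inv]; ring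
        _ ≤ (C * luxNorm μ (ofRealExp p) h) * (μ B / N) := by gcongr
        _ = luxNorm μ (ofRealExp p) h * A := by
            rw [hA, div_eq_mul_inv, div_eq_mul_inv]; ring)
  have hle : luxNorm μ (conjExp (ofRealExp p)) (B.indicator fun y => (w y)⁻¹) ≤ A * 2 := by
    refine sInf_le ⟨pos_iff_ne_zero.2 (mul_ne_zero hA0 (by simp)), ?_⟩
    convert hfin using 3 with x
    rw [div_eq_mul_inv, ENNReal.mul_inv (Or.inl hA0) (Or.inl hAt), div_eq_mul_inv, div_eq_mul_inv,
      mul_assoc]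
  calc N * luxNorm μ (conjExp (ofRealExp p)) (B.indicator fun y => (w y)⁻¹)
      ≤ N * (A * 2) := by gcongr
    _ = (N * N⁻¹) * (2 * C * μ B) := by rw [hA, div_eq_mul_inv]; ring
    _ = ((2 * C : ℝ≥0) : ℝ≥0∞) * μ B := by
        rw [ENNReal.mul_inv_cancel hN0 hNt]; simp

end SHT
end

section
/- Let (X,d,μ) be a space of homogeneous type and let p(·) be an exponent function with p(·) ∈ LH. Then there exists a constant C such that for all quasi-metric balls B ⊆ X, μ(B)^{p₋(B)−p₊(B)} ≤ C, where p₋(B) = essinf_{x∈B} p(x) and p₊(B) = esssup_{x∈B} p(x). -/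
open MeasureTheory ENNReal NNReal Filter

namespace SHT

variable {X : Type*} [MeasurableSpace X]

theorem osc_aux {X : Type*} [MeasurableSpace X] (ν : Measure X) (hν : ν ≠ 0) (s : Set X)
    (hs : ∀ᵐ x ∂ν, x ∈ s) (p : X → ℝ) (b B : ℝ) (hb : ∀ x, b ≤ p x) (hB : ∀ x, p x ≤ B)  :
    essInf p ν ≤ essSup p ν ∧ ∀ M, (∀ x ∈ s, ∀ y ∈ s, p x - p y ≤ M) →
      essSup p ν - essInf p ν ≤ M := by
  haveI : NeBot (ae ν) := ae_neBot.2 hν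
  have h1 : IsBoundedUnder (· ≤ ·) (ae ν) p := isBoundedUnder_of ⟨B, hB⟩
  have h2 : IsBoundedUnder (· ≥ ·) (ae ν) p := isBoundedUnder_of ⟨b, hb⟩
  refine ⟨liminf_le_limsup h1 h2, fun M hM => ?_⟩
  have h3 : ∀ y ∈ s, essSup p ν ≤ p y + M := fun y hy =>
    limsup_le_of_le h2.isCoboundedUnder_le (by
      filter_upwards [hs] with x hx
      linarith [hM x hx y hy])
  have h4 : essSup p ν - M ≤ essInf p ν :=
    le_liminf_of_le h1.isCoboundedUnder_ge (by
      filter_upwards [hs] with x hx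
      linarith [h3 x hx])
  linarith

theorem claim1 {A C C0 r o : ℝ} (hA : 1 ≤ A) (hC : 0 < C) (hC0 : 0 < C0) (hr : 0 < r)
    (ho : 0 ≤ o) (ha : o ≤ 2 * C)
    (hb : 2 * A * r < 1 / 2 → o ≤ C0 / (-Real.log (2 * A * r))) :
    o * Real.log (1 + 1 / r) ≤ 2 * C * Real.log (6 * A) + C0 := by
  have hs : 0 < 2 * A * r := by positivity
  have hl : 0 ≤ Real.log (6 * A) := Real.log_nonneg (by linarith)
  by_cases h : 2 * A * r < 1 / 2
  · have hlog : 0 < -Real.log (2 * A * r) := by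
      have := Real.log_neg hs (by linarith); linarith
    have h1 : 1 + 1 / r ≤ (6 * A) / (2 * A * r) := by
      have : (6 * A) / (2 * A * r) = 3 / r := by field_simp; norm_num
      rw [this]
      have : r ≤ 1 := by nlinarith
      rw [show 1 + 1 / r = (r + 1) / r by field_simp]
      gcongr; linarith
    have h2 := Real.log_le_log (by positivity) h1
    rw [Real.log_div (by positivity) hs.ne'] at h2
    have h3 := (le_div_iff₀ hlog).1 (hb h)
    have h4 := mul_le_mul_of_nonneg_left h2 ho
    have h5 := mul_le_mul_of_nonneg_right ha hl
    nlinarith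
  · push Not at h
    have h1 : 1 + 1 / r ≤ 6 * A := by
      have : 1 / r ≤ 4 * A := by
        rw [div_le_iff₀ hr]; nlinarith
      linarith
    have h2 := Real.log_le_log (by positivity) h1
    have h4 := mul_le_mul_of_nonneg_left h2 ho
    have h5 := mul_le_mul_of_nonneg_right ha hl
    linarith

theorem claim2 {A C δ o : ℝ} (hA : 1 ≤ A) (hC : 0 < C) (hδ : 0 ≤ δ)
    (ho : 0 ≤ o) (ha : o ≤ 2 * C)
    (hc : o ≤ 2 * C / Real.log (Real.exp 1 + δ / (2 * A))) :
    o * Real.log (1 + δ) ≤ 2 * C * Real.log (2 * A) + 2 * C := by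
  have he : 1 < Real.exp 1 := by simp
  have hq : 0 ≤ δ / (2 * A) := by positivity
  have hlog : 0 < Real.log (Real.exp 1 + δ / (2 * A)) := Real.log_pos (by linarith)
  have h1 : 1 + δ ≤ 2 * A * (Real.exp 1 + δ / (2 * A)) := by
    have : 2 * A * (Real.exp 1 + δ / (2 * A)) = 2 * A * Real.exp 1 + δ := by field_simp
    rw [this]; nlinarith
  have h2 := Real.log_le_log (by positivity) h1
  rw [Real.log_mul (by positivity) (by positivity)] at h2
  have h3 := (le_div_iff₀ hlog).1 hc
  have h4 := mul_le_mul_of_nonneg_left h2 ho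
  have h5 := mul_le_mul_of_nonneg_right ha (Real.log_nonneg (by linarith : 1 ≤ 2 * A))
  nlinarith

theorem claim3 {A C C0 r δ o : ℝ} (hA : 1 ≤ A) (hC : 0 < C) (hC0 : 0 < C0) (hr : 0 < r)
    (hδ : 0 ≤ δ) (ho : 0 ≤ o) (ha : o ≤ 2 * C)
    (hb : 2 * A * r < 1 / 2 → o ≤ C0 / (-Real.log (2 * A * r)))
    (hc : 2 * A * r ≤ δ → o ≤ 2 * C / Real.log (Real.exp 1 + δ / (2 * A))) :
    o * Real.log (A * (1 + δ) / r) ≤ 2 * C * Real.log (2 * A ^ 2) +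
      (2 * C * Real.log (6 * A) + C0) + (2 * C * Real.log (2 * A) + 2 * C) := by
  have c1 := claim1 hA hC hC0 hr ho ha hb
  have hA2 : 1 ≤ 2 * A ^ 2 := by nlinarith
  have hl := mul_le_mul_of_nonneg_right ha (Real.log_nonneg hA2)
  by_cases h : 2 * A * r ≤ δ
  · have c2 := claim2 hA hC hδ ho ha (hc h)
    have h1 : A * (1 + δ) / r ≤ (2 * A ^ 2) * ((1 + 1 / r) * (1 + δ)) := by
      have h0 : A ≤ 2 * A ^ 2 := by nlinarith
      have h0' : 1 / r ≤ 1 + 1 / r := by linarith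
      calc A * (1 + δ) / r = A * ((1 / r) * (1 + δ)) := by field_simp
        _ ≤ _ := by gcongr
    have h2 := Real.log_le_log (by positivity) h1
    rw [Real.log_mul (by positivity) (by positivity),
      Real.log_mul (x := 1 + 1 / r) (by positivity) (by positivity)] at h2
    have h4 := mul_le_mul_of_nonneg_left h2 ho
    nlinarith
  · push Not at h
    have h1 : A * (1 + δ) / r ≤ (2 * A ^ 2) * (1 + 1 / r) := by
      rw [div_le_iff₀ hr]
      have : (2 * A ^ 2) * (1 + 1 / r) * r = 2 * A ^ 2 * r + 2 * A ^ 2 := by field_simp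
      rw [this]; nlinarith
    have h2 := Real.log_le_log (by positivity) h1
    rw [Real.log_mul (by positivity) (by positivity)] at h2
    have h4 := mul_le_mul_of_nonneg_left h2 ho
    have h5 : 0 ≤ 2 * C * Real.log (2 * A) := by
      have := Real.log_nonneg (by linarith : 1 ≤ 2 * A)
      positivity
    nlinarith

theorem exists_n {r N : ℝ} (hr : 0 < r) (hN : 0 < N) :
    ∃ n : ℕ, N ≤ 2 ^ n * r ∧ ∀ o K : ℝ, 0 ≤ o → 0 ≤ K → o * Real.log (N / r) ≤ K →
      o * n ≤ K / Real.log 2 + o := by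
  have h2 : 0 < Real.log 2 := Real.log_pos (by norm_num)
  by_cases h : N ≤ r
  · refine ⟨0, by simpa using h, fun o K ho hK _ => ?_⟩
    have : 0 ≤ K / Real.log 2 := by positivity
    simp; linarith
  · push Not at h
    have hx : 0 < N / r := by positivity
    have hx1 : 1 ≤ N / r := by rw [le_div_iff₀ hr]; linarith
    have hL : 0 ≤ Real.log (N / r) / Real.log 2 := div_nonneg (Real.log_nonneg hx1) h2.le
    refine ⟨⌈Real.log (N / r) / Real.log 2⌉₊, ?_, fun o K ho hK hoK => ?_⟩
    · rw [← div_le_iff₀ hr, ← Real.log_le_log_iff hx (by positivity), Real.log_pow,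
        ← div_le_iff₀ h2]
      exact Nat.le_ceil _
    · have h1 := (Nat.ceil_lt_add_one hL).le
      have h3 := mul_le_mul_of_nonneg_left h1 ho
      have h4 : o * (Real.log (N / r) / Real.log 2) ≤ K / Real.log 2 := by
        rw [← mul_div_assoc]; gcongr
      linarith

theorem doubling_iter {X : Type*} [MeasurableSpace X] {d : X → X → ℝ} {μ : Measure X} {A₀ Cμ : ℝ}
    (hX : IsSHT d μ A₀ Cμ) (z : X) {r : ℝ} (hr : 0 < r) (n : ℕ) :
    μ (ball d z (2 ^ n * r)) ≤ ENNReal.ofReal Cμ ^ n * μ (ball d z r) := by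
  induction n with
  | zero => simp
  | succ n ih =>
    have := hX.doubling z (2 ^ n * r) (by positivity)
    rw [pow_succ', mul_assoc, pow_succ', mul_assoc]
    exact this.trans (by gcongr)

theorem measure_ball_rpow_osc_le
    {X : Type*} [MeasurableSpace X] (d : X → X → ℝ) (μ : Measure X) (A₀ Cμ : ℝ)
    (hX : IsSHT d μ A₀ Cμ) (x₀ : X)
    (p : X → ℝ) (hpmeas : Measurable p) (hp1 : ∀ x, 1 ≤ p x)
    (hLH : LH d x₀ p) :
    ∃ C : ℝ≥0, ∀ (z : X) (rad : ℝ), 0 < rad →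
      μ (ball d z rad) ^
          (essInf p (μ.restrict (ball d z rad)) - essSup p (μ.restrict (ball d z rad))) ≤ C := by
  obtain ⟨⟨C0, hC0, h0⟩, pinf, C, hC, hinf⟩ := hLH
  have hA := hX.one_le_A₀
  have he : 1 < Real.exp 1 := by simp
  have hbd : ∀ x, |p x - pinf| ≤ C := fun x => by
    refine (hinf x).trans (div_le_self hC.le ?_)
    rw [Real.le_log_iff_exp_le (by linarith [hX.d_nonneg x x₀])]
    linarith [hX.d_nonneg x x₀]
  set m0 := (μ (ball d x₀ 1)).toReal with hm0
  have hm0pos : 0 < m0 := ENNReal.toReal_pos (hX.ball_pos x₀ 1 one_pos).ne'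
    (hX.ball_ne_top x₀ 1 one_pos)
  obtain ⟨K, hK0, hK⟩ : ∃ K : ℝ, 0 ≤ K ∧ 2 * C * Real.log (2 * A₀ ^ 2) +
      (2 * C * Real.log (6 * A₀) + C0) + (2 * C * Real.log (2 * A₀) + 2 * C) = K := by
    refine ⟨_, ?_, rfl⟩
    have := Real.log_nonneg (by linarith : 1 ≤ 2 * A₀)
    have := Real.log_nonneg (by linarith : 1 ≤ 6 * A₀)
    have := Real.log_nonneg (by nlinarith : 1 ≤ 2 * A₀ ^ 2)
    positivity
  refine ⟨Real.toNNReal (Real.exp ((K / Real.log 2 + 2 * C) * Real.log Cμ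
    + 2 * C * |Real.log m0|)), fun z r hr => ?_⟩
  set ν := μ.restrict (ball d z r) with hν
  have hpos := hX.ball_pos z r hr
  have htop := hX.ball_ne_top z r hr
  have hν0 : ν ≠ 0 := by
    rw [hν, Ne, Measure.restrict_eq_zero]; exact hpos.ne'
  obtain ⟨hle, hosc⟩ := osc_aux ν hν0 (ball d z r)
    (ae_restrict_mem (hX.measurableSet_ball z r)) p 1 (pinf + C) hp1
    (fun x => by linarith [(abs_le.1 (hbd x)).2])
  obtain ⟨o, ho⟩ : ∃ o, o = essSup p ν - essInf p ν := ⟨_, rfl⟩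
  rw [← ho] at hosc
  have ho0 : 0 ≤ o := by linarith
  have ha : o ≤ 2 * C := hosc _ fun x _ y _ => by
    linarith [(abs_le.1 (hbd x)).2, (abs_le.1 (hbd y)).1]
  have hb : 2 * A₀ * r < 1 / 2 → o ≤ C0 / (-Real.log (2 * A₀ * r)) := fun hs => by
    have hs0 : 0 < 2 * A₀ * r := by positivity
    have hl : 0 < -Real.log (2 * A₀ * r) := by
      have := Real.log_neg hs0 (by linarith); linarith
    refine hosc _ fun x hx y hy => ?_
    rcases (hX.d_nonneg x y).eq_or_lt with h | h
    · have := (hX.d_eq_zero_iff x y).1 h.symm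
      subst this
      simp only [sub_self]; positivity
    · have h1 : d x y ≤ 2 * A₀ * r := by
        have h2 := hX.d_triangle x y z
        have hx' : d z x < r := hx
        have hy' : d z y < r := hy
        rw [hX.d_symm x z] at h2
        nlinarith
      refine (le_abs_self _).trans ((h0 x y h (by linarith)).trans ?_)
      have := Real.log_le_log h h1
      gcongr
  have hδ := hX.d_nonneg z x₀
  have hc : 2 * A₀ * r ≤ d z x₀ →
      o ≤ 2 * C / Real.log (Real.exp 1 + d z x₀ / (2 * A₀)) := fun hs => by
    have key : ∀ x ∈ ball d z r,
        |p x - pinf| ≤ C / Real.log (Real.exp 1 + d z x₀ / (2 * A₀)) := fun x hx => by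
      refine (hinf x).trans ?_
      have hq : 0 ≤ d z x₀ / (2 * A₀) := by positivity
      have hx' : d z x < r := hx
      have h1 : d z x₀ / (2 * A₀) ≤ d x x₀ := by
        rw [div_le_iff₀ (by positivity)]
        have := hX.d_triangle z x₀ x
        nlinarith
      have : 0 < Real.log (Real.exp 1 + d z x₀ / (2 * A₀)) := Real.log_pos (by linarith)
      gcongr
    refine hosc _ fun x hx y hy => ?_
    have h1 := (abs_le.1 (key x hx)).2
    have h2 := (abs_le.1 (key y hy)).1
    rw [mul_div_assoc]
    linarith
  have c3 := claim3 hA hC hC0 hr hδ ho0 ha hb hc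
  rw [hK] at c3
  obtain ⟨n, hn, hn2⟩ := exists_n (N := A₀ * (1 + d z x₀)) hr (by positivity)
  have hon := hn2 o K ho0 hK0 c3
  set m := (μ (ball d z r)).toReal with hm
  have hmpos : 0 < m := ENNReal.toReal_pos hpos.ne' htop
  have hCμ := hX.one_le_Cμ
  have hsub : ball d x₀ 1 ⊆ ball d z (2 ^ n * r) := fun y hy => by
    have hy' : d x₀ y < 1 := hy
    have := hX.d_triangle z y x₀
    change d z y < _
    nlinarith
  have hmm : m0 ≤ Cμ ^ n * m := by
    have h1 := (measure_mono hsub).trans (doubling_iter hX z hr n)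
    have h2 := ENNReal.toReal_mono (by finiteness) h1
    rwa [ENNReal.toReal_mul, ENNReal.toReal_pow, ENNReal.toReal_ofReal (by linarith)] at h2
  have hlog := Real.log_le_log hm0pos hmm
  rw [Real.log_mul (by positivity) hmpos.ne', Real.log_pow] at hlog
  have hexp : essInf p ν - essSup p ν = -o := by linarith
  rw [hexp, ← ENNReal.ofReal_toReal htop, ENNReal.ofReal_rpow_of_pos hmpos]
  change ENNReal.ofReal _ ≤ ENNReal.ofReal _
  apply ENNReal.ofReal_le_ofReal
  rw [Real.rpow_def_of_pos hmpos]
  apply Real.exp_le_exp.2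
  have hlC : 0 ≤ Real.log Cμ := Real.log_nonneg hCμ
  have e1 : o * (-Real.log m) ≤ o * (n * Real.log Cμ + |Real.log m0|) :=
    mul_le_mul_of_nonneg_left (by linarith [neg_abs_le (Real.log m0)]) ho0
  have e2 : (o * n) * Real.log Cμ ≤ (K / Real.log 2 + 2 * C) * Real.log Cμ :=
    mul_le_mul_of_nonneg_right (by linarith) hlC
  have e3 := mul_le_mul_of_nonneg_right ha (abs_nonneg (Real.log m0))
  change Real.log m * -o ≤ _
  nlinarith

end SHT
end

section
/- Let (X,d,μ) be a space of homogeneous type, let p(·) be an exponent function, and let w ∈ A_{p(·)}. Then there exists a constant C depending on p(·) and w such that for every quasi-metric ball B and every measurable set E ⊆ B, μ(E)/μ(B) ≤ C ‖w χ_E‖_{p(·)} / ‖w χ_B‖_{p(·)}. -/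
open MeasureTheory ENNReal NNReal Filter

namespace SHT

variable {X : Type*} [MeasurableSpace X]

lemma conj_conjExp (p : X → ℝ≥0∞) (hp1 : ∀ x, 1 ≤ p x) (x : X) :
    (p x).HolderConjugate (conjExp p x) := by
  unfold conjExp
  split_ifs with h
  · rw [h]; infer_instance
  · rw [ENNReal.holderConjugate_iff]
    have h1 := hp1 x
    generalize p x = a at *
    lift a to ℝ≥0 using h
    have h1 : 1 ≤ a := by exact_mod_cast h1
    rcases eq_or_lt_of_le h1 with rfl | h2
    · simp
    · have h3 : a - 1 ≠ 0 := (tsub_pos_of_lt h2).ne'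
      have h0 : a ≠ 0 := by positivity
      rw [show (1:ℝ≥0∞) = ((1:ℝ≥0):ℝ≥0∞) from rfl, ← ENNReal.coe_sub, ← ENNReal.coe_div h3,
        ← ENNReal.coe_inv h0, ← ENNReal.coe_inv (by positivity)]
      norm_cast
      rw [inv_div]
      field_simp
      rw [add_tsub_cancel_of_le h1]

lemma holder_modular (μ : Measure X) (p q : X → ℝ≥0∞) (hp : Measurable p) (hq : Measurable q)
    (hpq : ∀ x, (p x).HolderConjugate (q x)) (f g : X → ℝ≥0∞) (hf : Measurable f)
    (h1 : modular μ p f ≤ 1) (h2 : modular μ q g ≤ 1) : ∫⁻ x, f x * g x ∂μ ≤ 2 := by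
  unfold modular at h1 h2
  have mp : MeasurableSet {x | p x = ⊤} := hp (measurableSet_singleton _)
  have mq : MeasurableSet {x | q x = ⊤} := hq (measurableSet_singleton _)
  have mp' : MeasurableSet {x | p x ≠ ⊤} := mp.compl
  have mq' : MeasurableSet {x | q x ≠ ⊤} := mq.compl
  have e1 : ∀ᵐ x ∂μ, p x = ⊤ → f x ≤ 1 := by
    have := ENNReal.ae_le_essSup (μ := μ.restrict {x | p x = ⊤}) f
    rw [ae_restrict_iff' mp] at this
    filter_upwards [this] with x hx h
    exact (hx h).trans (le_add_self.trans h1)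
  have e2 : ∀ᵐ x ∂μ, q x = ⊤ → g x ≤ 1 := by
    have := ENNReal.ae_le_essSup (μ := μ.restrict {x | q x = ⊤}) g
    rw [ae_restrict_iff' mq] at this
    filter_upwards [this] with x hx h
    exact (hx h).trans (le_add_self.trans h2)
  have key : ∀ᵐ x ∂μ, f x * g x ≤ {x | p x ≠ ⊤}.indicator (fun x => f x ^ (p x).toReal) x
      + {x | q x ≠ ⊤}.indicator (fun x => g x ^ (q x).toReal) x := by
    filter_upwards [e1, e2] with x a1 a2
    have hc := hpq x
    rw [ENNReal.holderConjugate_iff] at hc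
    by_cases hpt : p x = ⊤
    · have hq1 : q x = 1 := by simpa [hpt] using hc
      simp only [Set.indicator, Set.mem_ofPred_eq, hpt, hq1]
      simpa using mul_le_mul_left (a1 hpt) (g x)
    by_cases hqt : q x = ⊤
    · have hq1 : p x = 1 := by simpa [hqt] using hc
      simp only [Set.indicator, Set.mem_ofPred_eq, hqt, hq1]
      simpa using mul_le_mul_right (a2 hqt) (f x)
    have hr : (p x).toReal.HolderConjugate (q x).toReal := by
      have := hpq x
      exact ENNReal.HolderConjugate.toReal_of_ne_top hpt hqt
    have := ENNReal.young_inequality (f x) (g x) hr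
    rw [ENNReal.ofReal_toReal hpt, ENNReal.ofReal_toReal hqt] at this
    simp only [Set.indicator, Set.mem_ofPred_eq, hpt, hqt, ne_eq, not_false_eq_true, if_true]
    refine this.trans (add_le_add ?_ ?_)
    · refine ENNReal.div_le_of_le_mul ?_
      refine le_mul_of_one_le_right' ?_
      exact ENNReal.inv_le_one.1 (hc ▸ le_self_add)
    · refine ENNReal.div_le_of_le_mul ?_
      refine le_mul_of_one_le_right' ?_
      exact ENNReal.inv_le_one.1 (hc ▸ le_add_self)
  refine (lintegral_mono_ae key).trans ?_
  rw [lintegral_add_left ((hf.pow hp.ennreal_toReal).indicator mp'), lintegral_indicator mp',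
    lintegral_indicator mq', ← one_add_one_eq_two]
  exact add_le_add (le_self_add.trans h1) (le_self_add.trans h2)

lemma holder_lux (μ : Measure X) (p q : X → ℝ≥0∞) (hp : Measurable p) (hq : Measurable q)
    (hpq : ∀ x, (p x).HolderConjugate (q x)) (f g : X → ℝ≥0∞) (hf : Measurable f)
    (hg : Measurable g)
    (h1 : luxNorm μ p f ≠ ⊤) (h2 : luxNorm μ q g ≠ ⊤) :
    ∫⁻ x, f x * g x ∂μ ≤ 2 * (luxNorm μ p f * luxNorm μ q g) := by
  have step : ∀ a b : ℝ≥0∞, luxNorm μ p f < a → luxNorm μ q g < b →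
      ∫⁻ x, f x * g x ∂μ ≤ 2 * (a * b) := by
    intro a b ha hb
    obtain ⟨l, ⟨hl0, hl⟩, hla⟩ := sInf_lt_iff.1 ha
    obtain ⟨n, ⟨hn0, hn⟩, hnb⟩ := sInf_lt_iff.1 hb
    have hlt : l ≠ ⊤ := hla.ne_top
    have hnt : n ≠ ⊤ := hnb.ne_top
    have := holder_modular μ p q hp hq hpq _ _ (hf.div_const l) hl hn
    calc ∫⁻ x, f x * g x ∂μ = ∫⁻ x, (l * n) * (f x / l * (g x / n)) ∂μ := by
          refine lintegral_congr fun x => ?_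
          rw [mul_mul_mul_comm, ENNReal.mul_div_cancel hl0.ne' hlt,
            ENNReal.mul_div_cancel hn0.ne' hnt]
      _ = (l * n) * ∫⁻ x, (f x / l * (g x / n)) ∂μ :=
          lintegral_const_mul _ ((hf.div_const l).mul (hg.div_const n))
      _ ≤ (l * n) * 2 := by gcongr
      _ = 2 * (l * n) := mul_comm _ _
      _ ≤ 2 * (a * b) := by gcongr
  have t : Filter.Tendsto (fun e : ℝ≥0∞ => 2 * ((luxNorm μ p f + e) * (luxNorm μ q g + e)))
      (nhdsWithin 0 (Set.Ioi 0)) (nhds (2 * ((luxNorm μ p f + 0) * (luxNorm μ q g + 0)))) := by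
    have t1 : ∀ c : ℝ≥0∞, Filter.Tendsto (fun e : ℝ≥0∞ => c + e)
      (nhdsWithin 0 (Set.Ioi 0)) (nhds (c + 0)) := fun c =>
        ((continuous_const.add continuous_id).tendsto 0).mono_left nhdsWithin_le_nhds
    refine ENNReal.Tendsto.const_mul ?_ (Or.inr (by simp))
    exact ENNReal.Tendsto.mul (t1 _) (Or.inr (by simpa using h2)) (t1 _) (Or.inr (by simpa using h1))
  simp only [add_zero] at t
  refine ge_of_tendsto t ?_
  filter_upwards [self_mem_nhdsWithin] with e he
  exact step _ _ (ENNReal.lt_add_right h1 (ne_of_gt he)) (ENNReal.lt_add_right h2 (ne_of_gt he))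

lemma lux_mono (μ : Measure X) (p : X → ℝ≥0∞) (f g : X → ℝ≥0∞) (h : ∀ x, f x ≤ g x) :
    luxNorm μ p f ≤ luxNorm μ p g := by
  refine sInf_le_sInf ?_
  rintro l ⟨h0, hl⟩
  refine ⟨h0, le_trans ?_ hl⟩
  unfold modular
  refine add_le_add (lintegral_mono fun x => ?_) (essSup_mono_ae (Eventually.of_forall fun x => ?_))
  · exact ENNReal.rpow_le_rpow (ENNReal.div_le_div_right (h x) _) ENNReal.toReal_nonneg
  · exact ENNReal.div_le_div_right (h x) _

lemma lux_ind_ne_top (μ : Measure X) (p : X → ℝ≥0∞) (hp1 : ∀ x, 1 ≤ p x)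
    (F : Set X) (hF : MeasurableSet F) (hμ : μ F ≠ ⊤) :
    luxNorm μ p (F.indicator 1) ≠ ⊤ := by
  have hc : μ F + 1 ≠ ⊤ := by simp [hμ]
  refine ne_top_of_le_ne_top hc (sInf_le ⟨by simp, ?_⟩)
  set c := μ F + 1 with hcdef
  have hc0 : c ≠ 0 := by simp [hcdef]
  have hle : c⁻¹ ≤ 1 := by simp [hcdef]
  unfold modular
  calc _ ≤ μ F * c⁻¹ + c⁻¹ := by
        refine add_le_add ?_ ?_
        · calc _ ≤ ∫⁻ x in {x | p x ≠ ⊤}, F.indicator (fun _ => c⁻¹) x ∂μ := by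
                refine setLIntegral_mono (measurable_const.indicator hF) fun x hx => ?_
                have h1 : 1 ≤ (p x).toReal := by
                  have := ENNReal.toReal_mono hx (hp1 x); simpa using this
                by_cases hxF : x ∈ F
                · simp only [hxF, Set.indicator_of_mem, Pi.one_apply, one_div]
                  exact (ENNReal.rpow_le_rpow_of_exponent_ge hle h1).trans (by simp)
                · simp [hxF, (zero_lt_one.trans_le h1)]
            _ ≤ ∫⁻ x, F.indicator (fun _ => c⁻¹) x ∂μ := setLIntegral_le_lintegral _ _
            _ = _ := by rw [lintegral_indicator hF, setLIntegral_const, mul_comm]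
        · refine essSup_le_of_ae_le _ (Eventually.of_forall fun x => ?_)
          by_cases hxF : x ∈ F <;> simp [hxF]
    _ = c * c⁻¹ := by rw [hcdef, add_mul, one_mul]
    _ ≤ 1 := (ENNReal.mul_inv_cancel hc0 hc).le

lemma lux_ne_zero (μ : Measure X) (p q : X → ℝ≥0∞) (hp : Measurable p) (hq : Measurable q)
    (hpq : ∀ x, (p x).HolderConjugate (q x)) (f : X → ℝ≥0∞) (hf : Measurable f)
    (hpos : ∀ᵐ x ∂μ, 0 < f x) (B : Set X) (hB : MeasurableSet B) (hB0 : μ B ≠ 0)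
    (hBt : μ B ≠ ⊤) : luxNorm μ p (B.indicator f) ≠ 0 := by
  intro h0
  have hq1 : ∀ x, 1 ≤ q x := fun x => by
    have hc := hpq x
    rw [ENNReal.holderConjugate_iff] at hc
    exact ENNReal.inv_le_one.1 (hc ▸ le_add_self)
  have h := holder_lux μ p q hp hq hpq (B.indicator f) (B.indicator 1) (hf.indicator hB)
    (measurable_one.indicator hB) (by simp [h0]) (lux_ind_ne_top μ q hq1 B hB hBt)
  rw [h0, zero_mul, mul_zero, nonpos_iff_eq_zero, lintegral_eq_zero_iff
    (by exact (hf.indicator hB).mul (measurable_one.indicator hB))] at h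
  apply hB0
  refine measure_mono_null_ae ?_ (measure_empty (μ := μ))
  filter_upwards [h, hpos] with x a b hx
  simp [Set.indicator_of_mem (show x ∈ B from hx)] at a
  exact absurd a b.ne'

theorem measure_ratio_le_luxNorm_ratio
    {X : Type*} [MeasurableSpace X] (d : X → X → ℝ) (μ : Measure X) (A₀ Cμ : ℝ)
    (hX : IsSHT d μ A₀ Cμ)
    (p : X → ℝ≥0∞) (hpmeas : Measurable p) (hp1 : ∀ x, 1 ≤ p x)
    (w : X → ℝ≥0∞) (hw : IsWeight d μ w) (hap : Apvar d μ p w) :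
    ∃ C : ℝ≥0, ∀ (z : X) (rad : ℝ), 0 < rad → ∀ E ⊆ ball d z rad, MeasurableSet E →
      μ E / μ (ball d z rad) ≤
        C * (luxNorm μ p (E.indicator w) / luxNorm μ p ((ball d z rad).indicator w)) := by
  obtain ⟨hwm, hwpos, -⟩ := hw
  obtain ⟨K, hK⟩ := hap
  have hc := conj_conjExp p hp1
  have hqm : Measurable (conjExp p) :=
    Measurable.ite (hpmeas (measurableSet_singleton _)) measurable_const
      (hpmeas.div (hpmeas.sub_const 1))
  refine ⟨2 * K, fun z r hr E hE mE => ?_⟩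
  have hB := hX.measurableSet_ball z r
  have hB0 := (hX.ball_pos z r hr).ne'
  have hBt := hX.ball_ne_top z r hr
  have hk := hK z r hr
  set B := ball d z r with hBdef
  have hN0 : luxNorm μ p (B.indicator w) ≠ 0 :=
    lux_ne_zero μ p _ hpmeas hqm hc w hwm (hwpos.mono fun x h => h.1) B hB hB0 hBt
  have hM0 : luxNorm μ (conjExp p) (B.indicator fun y => (w y)⁻¹) ≠ 0 :=
    lux_ne_zero μ _ p hqm hpmeas (fun x => (hc x).symm) _ hwm.inv
      (hwpos.mono fun x h => ENNReal.inv_pos.2 h.2.ne) B hB hB0 hBt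
  have hkt : (K : ℝ≥0∞) * μ B ≠ ⊤ := ENNReal.mul_ne_top (by simp) hBt
  have hprod := ne_top_of_le_ne_top hkt hk
  have hNt : luxNorm μ p (B.indicator w) ≠ ⊤ := fun h => hprod (by rw [h, ENNReal.top_mul hM0])
  have hMt : luxNorm μ (conjExp p) (B.indicator fun y => (w y)⁻¹) ≠ ⊤ :=
    fun h => hprod (by rw [h, ENNReal.mul_top hN0])
  have hNE : luxNorm μ p (E.indicator w) ≤ luxNorm μ p (B.indicator w) :=
    lux_mono μ p _ _ fun x => Set.indicator_le_indicator_of_subset hE (fun _ => zero_le) x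
  have hol := holder_lux μ p _ hpmeas hqm hc (E.indicator w) (B.indicator fun y => (w y)⁻¹)
    (hwm.indicator mE) (hwm.inv.indicator hB) (ne_top_of_le_ne_top hNt hNE) hMt
  have hEint : μ E ≤ ∫⁻ x, E.indicator w x * B.indicator (fun y => (w y)⁻¹) x ∂μ := by
    rw [← lintegral_indicator_one mE]
    refine lintegral_mono_ae ?_
    filter_upwards [hwpos] with x hx
    by_cases h : x ∈ E
    · simp [h, hE h, ENNReal.mul_inv_cancel hx.1.ne' hx.2.ne]
    · simp [h]
  have h1 := hEint.trans hol
  generalize luxNorm μ p (B.indicator w) = N at *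
  generalize luxNorm μ (conjExp p) (B.indicator fun y => (w y)⁻¹) = M at *
  generalize luxNorm μ p (E.indicator w) = L at *
  refine ENNReal.div_le_of_le_mul ?_
  calc μ E ≤ 2 * (L * M) := h1
    _ = 2 * (L / N) * (N * M) := by
        rw [mul_assoc, ← mul_assoc (L / N), ENNReal.div_mul_cancel hN0 hNt]
    _ ≤ 2 * (L / N) * (K * μ B) := by gcongr
    _ = _ := by push_cast; ring

end SHT
end

section
/- Let (X,d,μ) be a space of homogeneous type, let p(·) be an exponent function with p(·) ∈ LH, and let w ∈ A_{p(·)}. Then there exists a constant C₀ depending on p(·), w, and X such that for all quasi-metric balls B, ‖w χ_B‖_{p(·)}^{p₋(B)−p₊(B)} ≤ C₀, where p₋(B) = essinf_{x∈B} p(x) and p₊(B) = esssup_{x∈B} p(x). -/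
open MeasureTheory ENNReal NNReal Filter

namespace SHT

variable {X : Type*} [MeasurableSpace X]

theorem osc_facts (μ : Measure X) (p : X → ℝ) (S : Set X) (hS : MeasurableSet S) (hμ : μ S ≠ 0)
    (c δ : ℝ) (h : ∀ x ∈ S, |p x - c| ≤ δ) :
    essInf p (μ.restrict S) ≤ essSup p (μ.restrict S) ∧
    essSup p (μ.restrict S) - essInf p (μ.restrict S) ≤ 2 * δ := by
  have hne : (ae (μ.restrict S)).NeBot := by
    rw [ae_neBot]; simpa using hμ
  have h1 : p ≤ᵐ[μ.restrict S] fun _ => c + δ := by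
    filter_upwards [ae_restrict_mem hS] with x hx
    have := abs_le.1 (h x hx); linarith [this.2]
  have h2 : (fun _ => c - δ) ≤ᵐ[μ.restrict S] p := by
    filter_upwards [ae_restrict_mem hS] with x hx
    have := abs_le.1 (h x hx); linarith [this.1]
  have b1 : IsBoundedUnder (· ≤ ·) (ae (μ.restrict S)) p := ⟨c + δ, h1⟩
  have b2 : IsBoundedUnder (· ≥ ·) (ae (μ.restrict S)) p := ⟨c - δ, h2⟩
  have c1 := essSup_le_of_ae_le (c + δ) h1 b2.isCoboundedUnder_le
  have c2 := le_essInf_of_ae_le (c - δ) h2 b1.isCoboundedUnder_ge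
  exact ⟨liminf_le_limsup b1 b2, by linarith⟩

theorem ball_growth {d : X → X → ℝ} {μ : Measure X} {A₀ Cμ : ℝ} (hX : IsSHT d μ A₀ Cμ)
    (m : ℕ) (hm : Cμ ≤ 2 ^ m) (z : X) (r T : ℝ) (hr : 0 < r) (hT : 1 ≤ T) :
    μ (ball d z (T * r)) ≤ ENNReal.ofReal ((2 * T) ^ m) * μ (ball d z r) := by
  have key : ∀ n : ℕ, μ (ball d z (2 ^ n * r)) ≤ ENNReal.ofReal ((2 ^ n) ^ m) * μ (ball d z r) := by
    intro n
    induction n with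
    | zero => simp
    | succ n ih =>
      have e : (2 : ℝ) ^ (n + 1) * r = 2 * (2 ^ n * r) := by ring
      rw [e]
      refine (hX.doubling z _ (by positivity)).trans ?_
      have e2 : ((2 : ℝ) ^ (n + 1)) ^ m = 2 ^ m * (2 ^ n) ^ m := by rw [← mul_pow]; ring
      rw [e2, ENNReal.ofReal_mul (by positivity), mul_assoc]
      gcongr
  obtain ⟨n, h1, h2⟩ := exists_nat_pow_near hT (one_lt_two)
  refine le_trans (measure_mono ?_) ((key (n + 1)).trans ?_)
  · intro y hy
    have hy' : d z y < T * r := hy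
    exact lt_of_lt_of_le hy' (by gcongr)
  · gcongr
    rw [pow_succ]; linarith

theorem modular_real (μ : Measure X) (p : X → ℝ) (hp1 : ∀ x, 1 ≤ p x) (f : X → ℝ≥0∞) :
    modular μ (ofRealExp p) f = ∫⁻ x, f x ^ p x ∂μ := by
  have e1 : {x | ofRealExp p x ≠ ⊤} = Set.univ := by ext; simp [ofRealExp]
  have e2 : {x | ofRealExp p x = ⊤} = ∅ := by ext; simp [ofRealExp]
  have e3 : ∀ x, (ofRealExp p x).toReal = p x := fun x =>
    ENNReal.toReal_ofReal (by linarith [hp1 x])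
  simp [modular, e1, e2, e3]

theorem luxNorm_mono_set (μ : Measure X) (p : X → ℝ) (hp1 : ∀ x, 1 ≤ p x) (f : X → ℝ≥0∞)
    {S T : Set X} (h : S ⊆ T) :
    luxNorm μ (ofRealExp p) (S.indicator f) ≤ luxNorm μ (ofRealExp p) (T.indicator f) := by
  apply sInf_le_sInf
  rintro l ⟨hl, hm⟩
  refine ⟨hl, le_trans ?_ hm⟩
  rw [modular_real μ p hp1, modular_real μ p hp1]
  apply lintegral_mono
  intro x
  apply ENNReal.rpow_le_rpow _ (by linarith [hp1 x])
  exact ENNReal.div_le_div_right (Set.indicator_le_indicator_of_subset h (fun _ => zero_le) x) _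

theorem luxNorm_pos (μ : Measure X) (p : X → ℝ) (hp1 : ∀ x, 1 ≤ p x) (hp : Measurable p)
    (w : X → ℝ≥0∞) (hw : Measurable w) (hw0 : ∀ᵐ x ∂μ, 0 < w x ∧ w x < ⊤)
    (S : Set X) (hS : MeasurableSet S) (hμ : μ S ≠ 0) :
    0 < luxNorm μ (ofRealExp p) (S.indicator w) := by
  set I := ∫⁻ x in S, w x ^ p x ∂μ with hI
  have hIpos : I ≠ 0 := by
    intro h0
    rw [hI, lintegral_eq_zero_iff (hw.pow hp)] at h0
    apply hμ
    have : ∀ᵐ x ∂(μ.restrict S), False := by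
      filter_upwards [h0, ae_restrict_of_ae hw0] with x hx hx2
      have : w x ^ p x = 0 := hx
      rw [ENNReal.rpow_eq_zero_iff] at this
      rcases this with h | h
      · exact hx2.1.ne' h.1
      · exact hx2.2.ne h.1
    simpa using this
  have hpos : 0 < min 1 I := lt_min one_pos (pos_iff_ne_zero.2 hIpos)
  refine lt_of_lt_of_le hpos (le_sInf ?_)
  rintro l ⟨hl, hm⟩
  by_contra hlt
  push Not at hlt
  have hl1 : l < 1 := lt_of_lt_of_le hlt (min_le_left _ _)
  have hlI : l < I := lt_of_lt_of_le hlt (min_le_right _ _)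
  rw [modular_real μ p hp1] at hm
  have hlt' : l ≠ ⊤ := (hl1.trans ENNReal.one_lt_top).ne
  have : l⁻¹ * I ≤ 1 := by
    refine le_trans ?_ hm
    rw [hI, ← lintegral_const_mul _ (hw.pow hp), ← lintegral_indicator hS]
    apply lintegral_mono
    intro x
    by_cases hx : x ∈ S
    · simp only [hx, Set.indicator_of_mem]
      rw [div_eq_mul_inv, mul_comm, ENNReal.mul_rpow_of_nonneg _ _ (by linarith [hp1 x])]
      gcongr
      calc l⁻¹ = l⁻¹ ^ (1:ℝ) := by simp
        _ ≤ _ := ENNReal.rpow_le_rpow_of_exponent_le (ENNReal.one_le_inv.2 hl1.le) (hp1 x)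
    · simp [hx]
  have h3 : I ≤ l := by
    rw [mul_comm, ← div_eq_mul_inv] at this
    simpa using (ENNReal.div_le_iff hl.ne' hlt').1 this
  exact absurd hlI (not_lt.2 h3)

theorem holder_pt (p : X → ℝ) (hp1 : ∀ x, 1 ≤ p x) (x : X) (a b : ℝ≥0∞)
    (hb : conjExp (ofRealExp p) x = ⊤ → b ≤ 1) :
    a * b ≤ a ^ p x + {x | conjExp (ofRealExp p) x ≠ ⊤}.indicator
      (fun y => b ^ (conjExp (ofRealExp p) y).toReal) x := by
  rcases eq_or_lt_of_le (hp1 x) with h | h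
  · have : conjExp (ofRealExp p) x = ⊤ := by
      simp [conjExp, ofRealExp, ← h]
    rw [← h, ENNReal.rpow_one]
    exact le_trans (mul_le_of_le_one_right zero_le (hb this)) le_self_add
  · have e : conjExp (ofRealExp p) x = ENNReal.ofReal (p x / (p x - 1)) := by
      simp only [conjExp, ofRealExp, ENNReal.ofReal_ne_top, if_false]
      rw [ENNReal.ofReal_div_of_pos (by linarith), ENNReal.ofReal_sub _ zero_le_one,
        ENNReal.ofReal_one]
    have hq : (0:ℝ) ≤ p x / (p x - 1) := div_nonneg (by linarith) (by linarith)
    have hh := Real.HolderConjugate.conjExponent h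
    have hx : x ∈ {x | conjExp (ofRealExp p) x ≠ ⊤} := by simp [e]
    rw [Set.indicator_of_mem hx, e, ENNReal.toReal_ofReal hq]
    refine (ENNReal.young_inequality a b hh).trans ?_
    gcongr
    · apply ENNReal.div_le_of_le_mul
      exact le_mul_of_one_le_right zero_le (by simpa using h.le)
    · apply ENNReal.div_le_of_le_mul
      exact le_mul_of_one_le_right zero_le (by simpa using hh.symm.lt.le)

theorem holder_lam (μ : Measure X) (p : X → ℝ) (hp1 : ∀ x, 1 ≤ p x) (hp : Measurable p)
    (w : X → ℝ≥0∞) (hw : Measurable w) (hw0 : ∀ᵐ x ∂μ, 0 < w x ∧ w x < ⊤)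
    (S T : Set X) (hS : MeasurableSet S) (hST : S ⊆ T) (l n : ℝ≥0∞) (hl : 0 < l) (hl' : l ≠ ⊤)
    (hn : 0 < n) (hn' : n ≠ ⊤)
    (h1 : modular μ (ofRealExp p) (fun x => S.indicator w x / l) ≤ 1)
    (h2 : modular μ (conjExp (ofRealExp p)) (fun x => T.indicator (fun y => (w y)⁻¹) x / n) ≤ 1) :
    μ S ≤ 2 * l * n := by
  rw [modular_real μ p hp1] at h1
  have hcm : Measurable (conjExp (ofRealExp p)) := by
    have : conjExp (ofRealExp p) = fun x => ENNReal.ofReal (p x) / (ENNReal.ofReal (p x) - 1) := by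
      ext x; simp [conjExp, ofRealExp]
    rw [this]
    fun_prop
  have hset : MeasurableSet {x | conjExp (ofRealExp p) x ≠ ⊤} :=
    (hcm (measurableSet_singleton ⊤)).compl
  have hset' : MeasurableSet {x | conjExp (ofRealExp p) x = ⊤} := hcm (measurableSet_singleton ⊤)
  have i1 := le_self_add.trans h2
  have i2 := le_add_self.trans h2
  rw [← lintegral_indicator hset] at i1
  have hb : ∀ᵐ x ∂μ, conjExp (ofRealExp p) x = ⊤ →
      T.indicator (fun y => (w y)⁻¹) x / n ≤ 1 := by
    have := ENNReal.ae_le_essSup (μ := μ.restrict {x | conjExp (ofRealExp p) x = ⊤})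
      (fun x => T.indicator (fun y => (w y)⁻¹) x / n)
    rw [ae_restrict_iff' hset'] at this
    filter_upwards [this] with x hx hx2
    exact (hx hx2).trans i2
  have hFm : Measurable fun x => (S.indicator w x / l) ^ p x :=
    ((hw.indicator hS).div_const l).pow hp
  have main : ∫⁻ x, S.indicator (fun _ => (l * n)⁻¹) x ∂μ ≤ 1 + 1 := by
    refine le_trans ?_ (add_le_add h1 i1)
    rw [← lintegral_add_left hFm]
    apply lintegral_mono_ae
    filter_upwards [hb, hw0] with x hbx hwx
    by_cases hx : x ∈ S
    · have := holder_pt p hp1 x (S.indicator w x / l) (T.indicator (fun y => (w y)⁻¹) x / n) hbx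
      refine le_trans (le_of_eq ?_) (this.trans (le_of_eq ?_))
      · rw [Set.indicator_of_mem hx, Set.indicator_of_mem hx, Set.indicator_of_mem (hST hx),
          ENNReal.mul_inv (Or.inl hl.ne') (Or.inl hl'), div_eq_mul_inv, div_eq_mul_inv,
          mul_mul_mul_comm, ENNReal.mul_inv_cancel hwx.1.ne' hwx.2.ne, one_mul]
      · congr 1
    · simp [hx]
  rw [lintegral_indicator hS, setLIntegral_const, one_add_one_eq_two, mul_comm,
    ← div_eq_mul_inv] at main
  have hln : l * n ≠ 0 := mul_ne_zero hl.ne' hn.ne'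
  have := (ENNReal.div_le_iff hln (ENNReal.mul_ne_top hl' hn')).1 main
  rwa [mul_assoc]

theorem lower_bound (μ : Measure X) (p : X → ℝ) (hp1 : ∀ x, 1 ≤ p x) (hp : Measurable p)
    (w : X → ℝ≥0∞) (hw : Measurable w) (hw0 : ∀ᵐ x ∂μ, 0 < w x ∧ w x < ⊤)
    (S T : Set X) (hS : MeasurableSet S) (hST : S ⊆ T) (hSfin : μ S ≠ ⊤) (hS0 : μ S ≠ 0) (K : ℝ≥0)
    (G : ℝ≥0) (hG : μ T ≤ G * μ S)
    (hK : luxNorm μ (ofRealExp p) (T.indicator w) *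
      luxNorm μ (conjExp (ofRealExp p)) (T.indicator fun y => (w y)⁻¹) ≤ K * μ T)
    (c : ℝ≥0) (hc : 0 < c) (hc' : c ≤ luxNorm μ (ofRealExp p) (T.indicator w)) :
    (c / (2 * (K + 1) * (G + 1)) : ℝ≥0) ≤ luxNorm μ (ofRealExp p) (S.indicator w) := by
  apply le_sInf
  rintro l ⟨hl, hm⟩
  by_cases hl' : l = ⊤
  · simp [hl']
  have h1 : μ S / (2 * l) ≤ luxNorm μ (conjExp (ofRealExp p)) (T.indicator fun y => (w y)⁻¹) := by
    apply le_sInf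
    rintro n ⟨hn, hnm⟩
    by_cases hn' : n = ⊤
    · simp [hn']
    apply ENNReal.div_le_of_le_mul
    rw [mul_comm]
    exact holder_lam μ p hp1 hp w hw hw0 S T hS hST l n hl hl' hn hn' hm hnm
  have h2 : (c : ℝ≥0∞) * (μ S / (2 * l)) ≤ K * (G * μ S) :=
    (mul_le_mul' hc' h1).trans (hK.trans (by gcongr))
  lift l to ℝ≥0 using hl'
  lift μ S to ℝ≥0 using hSfin with s hs
  have hl0 : 0 < l := by exact_mod_cast hl
  have hs0 : 0 < s := by
    rw [pos_iff_ne_zero]; exact_mod_cast hS0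
  have h3 : c * (s / (2 * l)) ≤ K * (G * s) := by
    have e : ((s / (2 * l) : ℝ≥0) : ℝ≥0∞) = s / (2 * l) := by
      rw [ENNReal.coe_div (by positivity)]; simp
    rw [← e] at h2
    exact_mod_cast h2
  have h4 : c / (2 * (K + 1) * (G + 1)) ≤ l := by
    rw [div_le_iff₀ (by positivity)]
    have h5 : c * (s / (2 * l)) = (c / (2 * l)) * s := by ring
    rw [h5, ← mul_assoc] at h3
    have h6 := le_of_mul_le_mul_right h3 hs0
    rw [div_le_iff₀ (by positivity)] at h6
    calc c ≤ K * G * (2 * l) := h6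
      _ ≤ (K + 1) * (G + 1) * (2 * l) := by gcongr <;> simp
      _ = _ := by ring
  exact_mod_cast h4

theorem osc_log {d : X → X → ℝ} {μ : Measure X} {A₀ Cμ : ℝ} (hX : IsSHT d μ A₀ Cμ) (x₀ : X)
    (p : X → ℝ) (hLH : LH d x₀ p) :
    ∃ P M : ℝ, ∀ (z : X) (r o : ℝ), 0 < r → 0 ≤ o →
      (∀ δ, (∀ x ∈ ball d z r, |p x - p z| ≤ δ) → o ≤ 2 * δ) →
      o ≤ P ∧ o * Real.log ((A₀ * (d z x₀ + 1) + r) / r) ≤ M := by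
  obtain ⟨⟨C, hC, hC'⟩, pinf, Ci, hCi, hCi'⟩ := hLH
  have hA := hX.one_le_A₀
  have hlog1 : ∀ t : ℝ, 0 ≤ t → 1 ≤ Real.log (Real.exp 1 + t) := by
    intro t ht
    rw [Real.le_log_iff_exp_le (by positivity)]; linarith
  have hpb : ∀ x, |p x - pinf| ≤ Ci := fun x =>
    (hCi' x).trans (div_le_self hCi.le (hlog1 _ (hX.d_nonneg _ _)))
  have hE : (1:ℝ) ≤ Real.exp 1 := Real.one_le_exp zero_le_one
  have hlB : 0 ≤ Real.log (1 + A₀ + 2 * A₀ ^ 2) := Real.log_nonneg (by nlinarith)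
  have hlA : 0 ≤ Real.log (2 * A₀) := Real.log_nonneg (by linarith)
  refine ⟨4 * Ci, 4 * Ci * Real.log (1 + A₀ + 2 * A₀ ^ 2) + 4 * Ci * (1 + Real.log (2 * A₀)) +
    (2 * C + 4 * Ci * Real.log 2), ?_⟩
  intro z r o hr ho hδ
  have hD := hX.d_nonneg z x₀
  set D := d z x₀ with hDdef
  have hP : o ≤ 4 * Ci := by
    have := hδ (2 * Ci) (fun x _ => by
      have h1 := abs_le.1 (hpb x); have h2 := abs_le.1 (hpb z)
      rw [abs_le]; constructor <;> linarith [h1.1, h1.2, h2.1, h2.2])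
    linarith
  refine ⟨hP, ?_⟩
  have hm1 : 1 ≤ max 1 (1 / r) := le_max_left _ _
  have hl2 : 0 ≤ Real.log 2 := Real.log_nonneg one_le_two
  -- claim 1
  have c1 : o * Real.log (max 1 (1 / r)) ≤ 2 * C + 4 * Ci * Real.log 2 := by
    rcases lt_or_ge r (1 / 2) with h | h
    · have hlr : 0 < - Real.log r := by
        have := Real.log_neg hr (by linarith); linarith
      have : o ≤ 2 * (C / (- Real.log r)) := by
        apply hδ
        intro x hx
        have hx' : d z x < r := hx
        rcases eq_or_lt_of_le (hX.d_nonneg z x) with h0 | h0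
        · have := (hX.d_eq_zero_iff z x).1 h0.symm
          rw [this]; simp only [sub_self, abs_zero]; positivity
        · rw [abs_sub_comm]
          refine (hC' z x h0 (by linarith)).trans ?_
          have := Real.log_le_log h0 hx'.le
          gcongr
      rw [max_eq_right (by rw [le_div_iff₀ hr]; linarith), one_div, Real.log_inv]
      calc o * (- Real.log r) ≤ 2 * (C / (- Real.log r)) * (- Real.log r) := by gcongr
        _ = 2 * C := by rw [mul_assoc, div_mul_cancel₀ _ hlr.ne']
        _ ≤ _ := by nlinarith [mul_nonneg hCi.le hl2]
    · have : max 1 (1 / r) ≤ 2 := by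
        apply max_le one_le_two
        rw [div_le_iff₀ hr]; linarith
      calc o * Real.log (max 1 (1 / r)) ≤ 4 * Ci * Real.log 2 := by
            have := Real.log_nonneg hm1
            gcongr
        _ ≤ _ := by linarith
  have hT : (A₀ * (D + 1) + r) / r = 1 + A₀ * (D + 1) * (1 / r) := by field_simp; ring
  have hm2 : 1 / r ≤ max 1 (1 / r) := le_max_right _ _
  set m := max 1 (1 / r) with hmdef
  have hTpos : 0 < (A₀ * (D + 1) + r) / r := by positivity
  rcases le_or_gt D (2 * A₀ * r) with h | h
  · have hle : (A₀ * (D + 1) + r) / r ≤ (1 + A₀ + 2 * A₀ ^ 2) * m := by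
      rw [hT]
      have : D * (1 / r) ≤ 2 * A₀ := by
        rw [mul_one_div, div_le_iff₀ hr]; exact h
      have h5 : A₀ * (D + 1) * (1 / r) ≤ A₀ * (2 * A₀) + A₀ * m := by
        calc A₀ * (D + 1) * (1 / r) = A₀ * (D * (1 / r)) + A₀ * (1 / r) := by ring
          _ ≤ _ := by gcongr
      nlinarith [mul_nonneg (sq_nonneg A₀) (sub_nonneg.2 hm1)]
    have hl := Real.log_le_log hTpos hle
    rw [Real.log_mul (by positivity) (by positivity)] at hl
    calc o * Real.log ((A₀ * (D + 1) + r) / r) ≤ o * (Real.log (1 + A₀ + 2 * A₀ ^ 2) + Real.log m) := by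
          gcongr
      _ = o * Real.log (1 + A₀ + 2 * A₀ ^ 2) + o * Real.log m := by ring
      _ ≤ 4 * Ci * Real.log (1 + A₀ + 2 * A₀ ^ 2) + (2 * C + 4 * Ci * Real.log 2) := by gcongr
      _ ≤ _ := by
        have : 0 ≤ 4 * Ci * (1 + Real.log (2 * A₀)) := by positivity
        linarith
  · set L := Real.log (Real.exp 1 + D / (2 * A₀)) with hL
    have hL1 : 1 ≤ L := hlog1 _ (by positivity)
    have ho2 : o ≤ 2 * (2 * (Ci / L)) := by
      apply hδ
      intro x hx
      have hx' : d z x < r := hx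
      have tri := hX.d_triangle z x₀ x
      have hdx : D / (2 * A₀) ≤ d x x₀ := by
        rw [div_le_iff₀ (by positivity)]
        nlinarith
      have hdz : D / (2 * A₀) ≤ d z x₀ := div_le_self hD (by linarith)
      have g : ∀ y, D / (2 * A₀) ≤ d y x₀ → |p y - pinf| ≤ Ci / L := by
        intro y hy
        refine (hCi' y).trans ?_
        have : L ≤ Real.log (Real.exp 1 + d y x₀) := Real.log_le_log (by positivity) (by linarith)
        gcongr
      have h1 := abs_le.1 (g x hdx); have h2 := abs_le.1 (g z hdz)
      rw [abs_le]; constructor <;> linarith [h1.1, h1.2, h2.1, h2.2]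
    have hlD : Real.log (1 + D) ≤ Real.log (2 * A₀) + L := by
      rw [hL, ← Real.log_mul (by positivity) (by positivity)]
      apply Real.log_le_log (by positivity)
      have : 2 * A₀ * (Real.exp 1 + D / (2 * A₀)) = 2 * A₀ * Real.exp 1 + D := by field_simp
      rw [this]; nlinarith
    have c2 : o * Real.log (1 + D) ≤ 4 * Ci * (1 + Real.log (2 * A₀)) := by
      calc o * Real.log (1 + D) ≤ o * (Real.log (2 * A₀) + L) := by gcongr
        _ = o * Real.log (2 * A₀) + o * L := by ring
        _ ≤ 4 * Ci * Real.log (2 * A₀) + 2 * (2 * (Ci / L)) * L := by gcongr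
        _ = _ := by field_simp; ring
    have hle : (A₀ * (D + 1) + r) / r ≤ (1 + A₀ + 2 * A₀ ^ 2) * ((1 + D) * m) := by
      rw [hT]
      have h5 : A₀ * (D + 1) * (1 / r) ≤ A₀ * (D + 1) * m := by gcongr
      have h6 : 1 ≤ (1 + D) * m := one_le_mul_of_one_le_of_one_le (by linarith) hm1
      have h7 : 0 ≤ 2 * A₀ ^ 2 * ((1 + D) * m) := by positivity
      nlinarith
    have hl := Real.log_le_log hTpos hle
    rw [Real.log_mul (by positivity) (by positivity), Real.log_mul (by positivity) (by positivity)] at hl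
    calc o * Real.log ((A₀ * (D + 1) + r) / r)
        ≤ o * (Real.log (1 + A₀ + 2 * A₀ ^ 2) + (Real.log (1 + D) + Real.log m)) := by
          gcongr
      _ = o * Real.log (1 + A₀ + 2 * A₀ ^ 2) + o * Real.log (1 + D) + o * Real.log m := by ring
      _ ≤ _ := by gcongr

theorem luxNorm_rpow_osc_le
    {X : Type*} [MeasurableSpace X] (d : X → X → ℝ) (μ : Measure X) (A₀ Cμ : ℝ)
    (hX : IsSHT d μ A₀ Cμ) (x₀ : X)
    (p : X → ℝ) (hpmeas : Measurable p) (hp1 : ∀ x, 1 ≤ p x)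
    (hLH : LH d x₀ p)
    (w : X → ℝ≥0∞) (hw : IsWeight d μ w) (hap : Apvar d μ (ofRealExp p) w) :
    ∃ C₀ : ℝ≥0, ∀ (z : X) (rad : ℝ), 0 < rad →
      luxNorm μ (ofRealExp p) ((ball d z rad).indicator w) ^
          (essInf p (μ.restrict (ball d z rad)) - essSup p (μ.restrict (ball d z rad))) ≤ C₀ := by
  obtain ⟨P, M, hPM⟩ := osc_log hX x₀ p hLH
  obtain ⟨K, hK⟩ := hap
  obtain ⟨hwm, hw0, -⟩ := hw
  obtain ⟨m, hm⟩ := pow_unbounded_of_one_lt Cμ (one_lt_two (α := ℝ))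
  have hA := hX.one_le_A₀
  have hN0 := luxNorm_pos μ p hp1 hpmeas w hwm hw0 (ball d x₀ 1) (hX.measurableSet_ball _ _)
    (hX.ball_pos _ _ one_pos).ne'
  obtain ⟨c, hc0, hcN⟩ := ENNReal.lt_iff_exists_nnreal_btwn.1 hN0
  have hc0' : 0 < c := by exact_mod_cast hc0
  set b : ℝ := c / (2 * (K + 1) * (2 ^ m + 1)) with hb
  have hbpos : 0 < b := by
    have : (0:ℝ) < c := by exact_mod_cast hc0'
    positivity
  refine ⟨Real.toNNReal (Real.exp (P * |Real.log b| + m * M)), ?_⟩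
  intro z r hr
  have hμ0 := (hX.ball_pos z r hr).ne'
  have hos := osc_facts μ p (ball d z r) (hX.measurableSet_ball _ _) hμ0 (p z)
  set i := essInf p (μ.restrict (ball d z r))
  set s := essSup p (μ.restrict (ball d z r))
  have hD := hX.d_nonneg z x₀
  have ho : 0 ≤ s - i := by
    obtain ⟨-, pinf, Ci, hCi, hCi'⟩ := hLH
    have hpb : ∀ x, |p x - pinf| ≤ Ci := fun x =>
      (hCi' x).trans (div_le_self hCi.le (by
        have := hX.d_nonneg x x₀
        rw [Real.le_log_iff_exp_le (by positivity)]; linarith))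
    have := (osc_facts μ p (ball d z r) (hX.measurableSet_ball _ _) hμ0 pinf Ci
      (fun x _ => hpb x)).1
    exact sub_nonneg.2 this
  obtain ⟨hoP, hoM⟩ := hPM z r (s - i) hr ho (fun δ hδ => (hos δ hδ).2)
  set T := (A₀ * (d z x₀ + 1) + r) / r with hT
  have hT1 : 1 ≤ T := by
    rw [hT, le_div_iff₀ hr]
    have : 0 ≤ A₀ * (d z x₀ + 1) := by positivity
    linarith
  have hTr : T * r = A₀ * (d z x₀ + 1) + r := by rw [hT]; field_simp
  have hsub : ball d z r ⊆ ball d z (T * r) := by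
    intro y hy
    have hy' : d z y < r := hy
    show d z y < T * r
    nlinarith
  have hsub0 : ball d x₀ 1 ⊆ ball d z (T * r) := by
    intro y hy
    have hy' : d x₀ y < 1 := hy
    show d z y < T * r
    have := hX.d_triangle z y x₀
    rw [hTr]
    nlinarith
  have hgr := ball_growth hX m hm.le z r T hr hT1
  have hlow := lower_bound μ p hp1 hpmeas w hwm hw0 (ball d z r) (ball d z (T * r))
    (hX.measurableSet_ball _ _) hsub (hX.ball_ne_top z r hr) hμ0 K
    (Real.toNNReal ((2 * T) ^ m)) hgr (hK z (T * r) (by positivity)) c hc0'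
    (hcN.le.trans (luxNorm_mono_set μ p hp1 w hsub0))
  have hlow2 : ENNReal.ofReal (b / T ^ m) ≤
      luxNorm μ (ofRealExp p) ((ball d z r).indicator w) := by
    refine le_trans ?_ hlow
    rw [ENNReal.ofReal_le_iff_le_toReal ENNReal.coe_ne_top]
    rw [ENNReal.coe_toReal]
    push_cast
    rw [Real.coe_toNNReal _ (by positivity), hb, div_div]
    have : (2 * T) ^ m + 1 ≤ (2 ^ m + 1) * T ^ m := by
      have := one_le_pow₀ hT1 (n := m)
      rw [mul_pow]; linarith
    rw [mul_assoc (2 * ((K : ℝ) + 1))]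
    gcongr
  have hTpos : 0 < T := by linarith
  have hq : 0 < b / T ^ m := by positivity
  rw [← neg_sub s i, ENNReal.rpow_neg]
  refine (ENNReal.inv_le_inv.2 (ENNReal.rpow_le_rpow hlow2 ho)).trans ?_
  rw [ENNReal.ofReal_rpow_of_pos hq, ← ENNReal.ofReal_inv_of_pos (by positivity)]
  change ENNReal.ofReal _ ≤ ENNReal.ofReal _
  apply ENNReal.ofReal_le_ofReal
  rw [Real.rpow_def_of_pos hq, ← Real.exp_neg, Real.exp_le_exp,
    Real.log_div hbpos.ne' (by positivity), Real.log_pow]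
  have e1 : (s - i) * (-Real.log b) ≤ P * |Real.log b| := by
    calc (s - i) * (-Real.log b) ≤ (s - i) * |Real.log b| := by
          gcongr; exact neg_le_abs _
      _ ≤ _ := by gcongr
  have e2 : (m : ℝ) * ((s - i) * Real.log T) ≤ m * M := by gcongr
  linarith

end SHT
end
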